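/- arXiv:1911.08385 — 2 statements merged into one kernel-verified Lean document; each statement's English description precedes it below -/
import Mathlib

section
/- Let γ^1,…,γ^n be a Clifford family of N×N complex matrices, γ^{ab} := (1/2)(γ^a γ^b − γ^b γ^a), L^{ab}(u) := u·δ^{ab}·1_N − (1/2)·γ^{ab}, and β := (n−2)/2. Then the fusion identity Σ_{c=1}^n L^{a c}(u + β − 1/2) · γ^{b_0} · L^{c b}(−1/2 − u) = −( u(u+β)·δ^{ab}·γ^{b_0} + (u+β)·δ^{a b_0}·γ^{b} − u·δ^{b_0 b}·γ^{a} ) holds for all complex u and all indices a, b, b_0 ∈ {1,…,n}; i.e. the fusion of two spinor L-operators reproduces the fundamental orthogonal R-matrix contracted with a gamma matrix. -/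
/-!
Write `G` for the matrix with entries `γ^a γ^b`. The Clifford relations say `G + Gᵀ = 2`, so
`L(u) = (u + 1/2) - G/2`. Expanding `L(v) γ^d L(w)` with `x = v + 1/2` and `y = w + 1/2`, and
moving `γ^d` between `γ^a` and `γ^b` in each cubic term, leaves terms at most linear in the `γ`'s
together with `(x + y - β)/2 • γ^a γ^d γ^b`; here `β = n/2 - 1` comes from
`∑ c, γ^c γ^d γ^c = (2 - n) γ^d`. The fusion point `x = u + β`, `y = -u` is where the cubic term
vanishes.
-/

open Matrix (scalar vecMulVec)
open scoped Matrix

/-- A Clifford family in a ring: elements with `γ^a γ^b + γ^b γ^a = 2 δ^{ab}`, the hypothesis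
under which the spinor `L`-operator is studied. -/
def IsCliffordFamily {ι A : Type*} [DecidableEq ι] [Ring A] (γ : ι → A) : Prop :=
  ∀ a b, γ a * γ b + γ b * γ a = if a = b then 2 else 0

namespace IsCliffordFamily

variable {ι A : Type*} [DecidableEq ι] [Ring A] {γ : ι → A}

theorem mul_eq_sub (hγ : IsCliffordFamily γ) (a b : ι) :
    γ a * γ b = (if a = b then 2 else 0) - γ b * γ a :=
  eq_sub_of_add_eq (hγ a b)

theorem mul_self (hγ : IsCliffordFamily γ) (h2 : IsLeftRegular (2 : A)) (a : ι) :
    γ a * γ a = 1 :=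
  h2 (by simpa [two_mul, one_add_one_eq_two] using hγ a a)

theorem sum_mul_mul_self [Fintype ι] (hγ : IsCliffordFamily γ) (h2 : IsLeftRegular (2 : A))
    (d : ι) : ∑ c, γ c * γ d * γ c = (2 - Fintype.card ι : ℤ) • γ d := by
  have conj_eq (c : ι) : γ c * γ d * γ c = (if c = d then 2 * γ c else 0) - γ d := by
    rw [hγ.mul_eq_sub c d, sub_mul, mul_assoc, hγ.mul_self h2, mul_one, ite_mul, zero_mul]
  simp [conj_eq, sub_mul]

theorem vecMulVec_add_transpose (hγ : IsCliffordFamily γ) :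
    vecMulVec γ γ + (vecMulVec γ γ)ᵀ = (2 : ℤ) • 1 := by
  ext a b
  simp [Matrix.vecMulVec_apply, hγ a b, Matrix.one_apply]

variable [Fintype ι]

theorem scalar_mul_vecMulVec_apply (hγ : IsCliffordFamily γ) (a b d : ι) :
    (scalar ι (γ d) * vecMulVec γ γ) a b =
      (if a = d then (2 : ℤ) • γ b else 0) - γ a * γ d * γ b := by
  rw [Matrix.scalar_apply, Matrix.diagonal_mul, Matrix.vecMulVec_apply, ← mul_assoc,
    hγ.mul_eq_sub d a, sub_mul]
  simp [eq_comm]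

theorem vecMulVec_mul_scalar_apply (hγ : IsCliffordFamily γ) (a b d : ι) :
    (vecMulVec γ γ * scalar ι (γ d)) a b =
      (if d = b then (2 : ℤ) • γ a else 0) - γ a * γ d * γ b := by
  rw [Matrix.scalar_apply, Matrix.mul_diagonal, Matrix.vecMulVec_apply, mul_assoc,
    hγ.mul_eq_sub b d, mul_sub, mul_assoc]
  simp [eq_comm, mul_two, two_mul]

theorem vecMulVec_mul_scalar_mul_vecMulVec_apply (hγ : IsCliffordFamily γ)
    (h2 : IsLeftRegular (2 : A)) (a b d : ι) :
    (vecMulVec γ γ * scalar ι (γ d) * vecMulVec γ γ) a b =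
      (2 - Fintype.card ι : ℤ) • (γ a * γ d * γ b) := by
  calc (vecMulVec γ γ * scalar ι (γ d) * vecMulVec γ γ) a b
      = γ a * (∑ c, γ c * γ d * γ c) * γ b := by
        rw [Matrix.mul_apply, Finset.mul_sum, Finset.sum_mul]
        simp only [Matrix.scalar_apply, Matrix.mul_diagonal, Matrix.vecMulVec_apply, mul_assoc]
    _ = (2 - Fintype.card ι : ℤ) • (γ a * γ d * γ b) := by
        rw [hγ.sum_mul_mul_self h2, mul_smul_comm, smul_mul_assoc]

end IsCliffordFamily

section SpinorL

variable {ι R A : Type*} [DecidableEq ι] [CommRing R] [Invertible (2 : R)] [Ring A] [Algebra R A]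

/-- The spinor `L`-operator `L^{ab}(u) = u δ^{ab} - (1/2) γ^{ab}`, as a matrix over the algebra
containing the `γ`'s. Since `vecMulVec γ γ` has entries `γ^a γ^b`, the antisymmetrised product
`γ^{ab}` is half the difference between this matrix and its transpose. -/
def spinorL (γ : ι → A) (u : R) : Matrix ι ι A :=
  u • 1 - (⅟2 : R) • (⅟2 : R) • (vecMulVec γ γ - (vecMulVec γ γ)ᵀ)

theorem spinorL_apply (γ : ι → A) (u : R) (a b : ι) :
    spinorL γ u a b = (u * if a = b then 1 else 0) • (1 : A)
      - (⅟2 : R) • (⅟2 : R) • (γ a * γ b - γ b * γ a) := by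
  simp [spinorL, Matrix.one_apply, Matrix.vecMulVec_apply]

variable {γ : ι → A}

theorem spinorL_eq_smul_one_sub_smul_vecMulVec (hγ : IsCliffordFamily γ) (u : R) :
    spinorL γ u = (u + ⅟2) • 1 - (⅟2 : R) • vecMulVec γ γ := by
  rw [spinorL, eq_sub_of_add_eq' hγ.vecMulVec_add_transpose]
  linear_combination (norm := module)
    (invOf_mul_self (2 : R)) • ((⅟2 : R) • (1 : Matrix ι ι A) - (⅟2 : R) • vecMulVec γ γ)

variable [Fintype ι]

theorem spinorL_mul_scalar_mul_spinorL_apply (hγ : IsCliffordFamily γ) (v w : R) (a b d : ι) :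
    (spinorL γ v * scalar ι (γ d) * spinorL γ w) a b =
      ((v + ⅟2) * (w + ⅟2) * if a = b then 1 else 0) • γ d
        - ((v + ⅟2) * if a = d then 1 else 0) • γ b
        - ((w + ⅟2) * if d = b then 1 else 0) • γ a
        + (⅟2 * (v + w + 2 - ⅟2 * Fintype.card ι)) • (γ a * γ d * γ b) := by
  have two_isUnit : IsUnit (2 : A) := by
    simpa only [map_ofNat] using (isUnit_of_invertible (2 : R)).map (algebraMap R A)
  let G := vecMulVec γ γ
  let D := scalar ι (γ d)
  have expand : spinorL γ v * D * spinorL γ w =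
      ((v + ⅟2) * (w + ⅟2)) • D - ((v + ⅟2) * ⅟2) • (D * G) - ((w + ⅟2) * ⅟2) • (G * D)
        + ((⅟2 : R) * ⅟2) • (G * D * G) := by
    simp only [spinorL_eq_smul_one_sub_smul_vecMulVec hγ, sub_mul, mul_sub, smul_mul_assoc,
      mul_smul_comm, one_mul, mul_one]
    module
  rw [expand]
  simp only [Matrix.add_apply, Matrix.sub_apply, Matrix.smul_apply, G, D,
    hγ.scalar_mul_vecMulVec_apply, hγ.vecMulVec_mul_scalar_apply,
    hγ.vecMulVec_mul_scalar_mul_vecMulVec_apply two_isUnit.isRegular.left]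
  simp only [Matrix.scalar_apply, Matrix.diagonal_apply]
  -- `module` treats `⅟2` as an atom, so `⅟2 * 2 = 1` is supplied once for each product involved.
  have half : (⅟2 : R) * 2 = 1 := invOf_mul_self 2
  linear_combination (norm := (split_ifs <;> module))
    half • ((2 * ⅟2 : R) • (γ a * γ d * γ b)
      - ((v + ⅟2 : R) * if a = d then 1 else 0) • γ b
      - ((w + ⅟2 : R) * if d = b then 1 else 0) • γ a)

theorem spinor_L_fusion_general (hγ : IsCliffordFamily γ) {β : R}
    (hβ : β = ⅟2 * (Fintype.card ι - 2)) (u : R) (a b b₀ : ι) :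
    ∑ c, spinorL γ (u + β - ⅟2) a c * γ b₀ * spinorL γ (-⅟2 - u) c b =
      -((u * (u + β) * if a = b then 1 else 0) • γ b₀
        + ((u + β) * if a = b₀ then 1 else 0) • γ b
        - (u * if b₀ = b then 1 else 0) • γ a) := by
  have fusion_point : u + β - ⅟2 + (-⅟2 - u) + 2 - ⅟2 * Fintype.card ι = 0 := by
    linear_combination hβ - 2 * invOf_mul_self (2 : R)
  calc ∑ c, spinorL γ (u + β - ⅟2) a c * γ b₀ * spinorL γ (-⅟2 - u) c b
      = (spinorL γ (u + β - ⅟2) * scalar ι (γ b₀) * spinorL γ (-⅟2 - u)) a b := by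
        rw [Matrix.mul_apply]
        simp only [Matrix.scalar_apply, Matrix.mul_diagonal]
    _ = _ := by
        rw [spinorL_mul_scalar_mul_spinorL_apply hγ, fusion_point]
        module

end SpinorL

/-- Fusion identity: the fusion of two spinor L-operators reproduces the fundamental
orthogonal R-matrix contracted with a gamma matrix:
`Σ_c L^{ac}(u+β−1/2)·γ^{b₀}·L^{cb}(−1/2−u)
  = −( u(u+β)·δ^{ab}·γ^{b₀} + (u+β)·δ^{a b₀}·γ^{b} − u·δ^{b₀ b}·γ^{a} )`. -/
theorem spinor_L_fusion {n N : ℕ}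
    (γ : Fin n → Matrix (Fin N) (Fin N) ℂ)
    (hγ : ∀ a b, γ a * γ b + γ b * γ a =
      if a = b then (2 : ℂ) • (1 : Matrix (Fin N) (Fin N) ℂ) else 0)
    (L : ℂ → Fin n → Fin n → Matrix (Fin N) (Fin N) ℂ)
    (hL : ∀ u a b, L u a b =
      (u * (if a = b then (1 : ℂ) else 0)) • (1 : Matrix (Fin N) (Fin N) ℂ) -
        (1/2 : ℂ) • ((1/2 : ℂ) • (γ a * γ b - γ b * γ a)))
    (β : ℂ) (hβ : β = ((n : ℂ) - 2) / 2) :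
    ∀ (u : ℂ) (a b b₀ : Fin n),
      ∑ c, L (u + β - 1/2) a c * γ b₀ * L (-1/2 - u) c b =
        -((u * (u + β) * (if a = b then (1 : ℂ) else 0)) • γ b₀ +
          ((u + β) * (if a = b₀ then (1 : ℂ) else 0)) • γ b -
          (u * (if b₀ = b then (1 : ℂ) else 0)) • γ a) := by
  have clifford : IsCliffordFamily γ := by simpa [IsCliffordFamily, ofNat_smul_eq_nsmul] using hγ
  have L_eq (u a b) : L u a b = spinorL γ u a b := by
    rw [hL, spinorL_apply, invOf_eq_inv, one_div]
  simpa only [L_eq, invOf_eq_inv, one_div, neg_div] using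
    spinor_L_fusion_general (R := ℂ) clifford (by simp [hβ, div_eq_inv_mul])
end

section
/- Let γ^1, γ^2, γ^3, γ^4 be 4×4 complex matrices satisfying γ^a γ^b + γ^b γ^a = 2δ^{ab}·1 for all a,b, and let z = (1/2)·Σ_{a=1}^4 γ^a ⊗ γ^a. Then the flip operator S on ℂ⁴ ⊗ ℂ⁴ is the polynomial in z: S = (1/6)·(z⁴ − 2z³ − 7z² + 8z + 6), equivalently S = P_0 + P_1 − P_{−1} − P_2 − P_{−2} in terms of the spectral projectors of z onto its eigenvalues 0, ±1, ±2. -/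
open Kronecker

/-!
The ordered products `Γ_s` of the `γ a`, `a ∈ s`, and their inverses, the reversed products, are
dual for the trace form, so when they are as many as the matrix units they form dual bases and
`∑ s, Γ_s ⊗ Γ_s⁻¹` is a multiple of the flip. Sorting the reversed factors gives
`Γ_s ⊗ Γ_s⁻¹ = (-1) ^ (#s choose 2) ∏_{a ∈ s} g a` with `g a = γ a ⊗ γ a`. The `g a` are commuting
involutions, so Newton's identities express their elementary symmetric polynomials through
`e₁ = 2 z`; for four of them `4 S = 1 + e₁ - e₂ - e₃ + e₄` is the claimed polynomial.
-/

open Finset MvPolynomial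

/-- A Clifford family in a ring: pairwise anticommuting involutions. When `2` is invertible this is
`γ a * γ b + γ b * γ a = 2 δ a b`. -/
structure IsCliffordFamily_s12 {ι A : Type*} [Ring A] (γ : ι → A) : Prop where
  mul_self (a : ι) : γ a * γ a = 1
  anticomm : Pairwise fun a b => γ a * γ b = -(γ b * γ a)

/-- The flip `x ⊗ y ↦ y ⊗ x` of the two tensor factors, as a permutation matrix. -/
def flipMatrix (n R : Type*) [DecidableEq n] [Zero R] [One R] : Matrix (n × n) (n × n) R :=
  Equiv.Perm.permMatrix R (Equiv.prodComm n n)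

lemma eq_zero_of_eq_neg_of_isUnit_two {R : Type*} [Ring R] (h2 : IsUnit (2 : R)) {x : R}
    (hx : x = -x) : x = 0 :=
  h2.mul_right_eq_zero.mp (by rw [two_mul, ← eq_neg_iff_add_eq_zero, ← hx])

section Flip

variable {n R : Type*} [DecidableEq n] [CommRing R]

lemma flipMatrix_apply (p q : n × n) :
    flipMatrix n R p q = if p.1 = q.2 ∧ p.2 = q.1 then 1 else 0 := by
  simp [flipMatrix, PEquiv.toMatrix_apply, Prod.ext_iff, eq_comm, and_comm]

variable [Fintype n]

lemma eq_flipMatrix_of_mulVec {S : Matrix (n × n) (n × n) R}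
    (hS : ∀ x y : n → R, S.mulVec (fun p => x p.1 * y p.2) = fun p => y p.1 * x p.2) :
    S = flipMatrix n R := by
  ext p ⟨i, j⟩
  have single_tensor :
      (fun p : n × n => (Pi.single i 1 : n → R) p.1 * (Pi.single j 1 : n → R) p.2) =
        Pi.single (i, j) 1 := by
    ext q
    simp only [Pi.single_apply, Prod.ext_iff, ← ite_and, mul_ite, mul_one, mul_zero, and_comm]
  have column := congrFun (hS (Pi.single i 1) (Pi.single j 1)) p
  rw [single_tensor, Matrix.mulVec_single_one] at column
  simp only [Matrix.col_apply] at column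
  rw [column, flipMatrix_apply]
  simp only [Pi.single_apply, ← ite_and, mul_ite, mul_one, mul_zero, and_comm]

-- Duality says `G * H = 1` for the matrices with rows `G s` and columns `c⁻¹ • (H t)ᵀ`; these are
-- square, so `H * G = 1` as well, and its entries are those of the flip.
lemma sum_kronecker_eq_smul_flipMatrix {κ : Type*} [Fintype κ] [DecidableEq κ]
    (G H : κ → Matrix n n R) {c : R} (hc : IsUnit c)
    (hcard : Fintype.card κ = Fintype.card n ^ 2)
    (dual : ∀ s t, (G s * H t).trace = if s = t then c else 0) :
    ∑ s, G s ⊗ₖ H s = c • flipMatrix n R := by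
  obtain ⟨u, rfl⟩ := hc
  let rows : Matrix κ (n × n) R := Matrix.of fun s p => G s p.1 p.2
  let cols : Matrix (n × n) κ R := Matrix.of fun p t => ↑u⁻¹ * H t p.2 p.1
  have rows_mul_cols : rows * cols = 1 := by
    ext s t
    have entry : (rows * cols) s t = ↑u⁻¹ * (G s * H t).trace := by
      simp only [rows, cols, Matrix.mul_apply, Matrix.of_apply, Fintype.sum_prod_type,
        Matrix.trace, Matrix.diag, Finset.mul_sum, mul_left_comm]
    rw [entry, dual, Matrix.one_apply]
    split_ifs <;> simp
  have cols_mul_rows : cols * rows = 1 :=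
    (Matrix.mul_eq_one_comm_of_card_eq _ _ _ (by simpa [sq] using hcard)).mp rows_mul_cols
  ext ⟨i, k⟩ ⟨j, l⟩
  have entry := congrFun (congrFun cols_mul_rows (l, k)) (i, j)
  simp only [rows, cols, Matrix.mul_apply, Matrix.of_apply, mul_assoc, ← Finset.mul_sum,
    Matrix.one_apply, Prod.mk.injEq, Units.inv_mul_eq_iff_eq_mul] at entry
  simp only [Matrix.sum_apply, Matrix.kronecker_apply, Matrix.smul_apply, smul_eq_mul,
    flipMatrix_apply, mul_comm (G _ _ _), entry, eq_comm]

end Flip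

section Clifford

lemma exists_odd_card_erase_add_card_erase {ι : Type*} [Fintype ι] [DecidableEq ι]
    (hι : Even (Fintype.card ι)) {s t : Finset ι} (hst : s ≠ t) :
    ∃ c, Odd (#(s.erase c) + #(t.erase c)) := by
  by_contra! h
  have parity (c : ι) : (c ∈ s ↔ c ∈ t) ↔ Even (#s + #t) := by
    have := h c
    grind [card_erase_add_one, erase_eq_of_notMem]
  by_cases heven : Even (#s + #t)
  · exact hst (ext fun c => (parity c).mpr heven)
  · have ht : t = sᶜ := by
      ext c
      have := parity c
      rw [mem_compl]
      tauto
    rw [ht, card_add_card_compl] at heven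
    exact heven hι

namespace IsCliffordFamily_s12

section Ring

variable {ι A : Type*} [Ring A] {γ : ι → A}

lemma prod_map_mul_prod_map_reverse (hγ : IsCliffordFamily_s12 γ) (l : List ι) :
    (l.map γ).prod * (l.reverse.map γ).prod = 1 := by
  induction l with
  | nil => simp
  | cons a l ih =>
    simp only [List.map_cons, List.prod_cons, List.reverse_cons, List.map_append, List.prod_append,
      List.map_nil, List.prod_nil, mul_one]
    rw [mul_assoc, ← mul_assoc _ _ (γ a), ih, one_mul, hγ.mul_self]

variable [DecidableEq ι]

lemma of_anticommutator {R : Type*} [CommRing R] [Algebra R A] (h2 : IsUnit (2 : R))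
    (h : ∀ a b, γ a * γ b + γ b * γ a = if a = b then (2 : R) • (1 : A) else 0) :
    IsCliffordFamily_s12 γ where
  mul_self a := h2.smul_left_cancel.mp (by simpa [two_smul] using h a a)
  anticomm a b hab := eq_neg_of_add_eq_zero_left (by simpa [hab] using h a b)

lemma mul_prod_map (hγ : IsCliffordFamily_s12 γ) (c : ι) (l : List ι) :
    γ c * (l.map γ).prod = (-1 : ℤ) ^ l.countP (· ≠ c) • ((l.map γ).prod * γ c) := by
  induction l with
  | nil => simp
  | cons a l ih =>
    rw [List.map_cons, List.prod_cons]
    rcases eq_or_ne a c with rfl | hac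
    · rw [List.countP_cons_of_neg (by simp), mul_assoc, ← mul_smul_comm, ← ih]
    · rw [List.countP_cons_of_pos (by simpa), ← mul_assoc, hγ.anticomm hac.symm, neg_mul, mul_assoc,
        ih, mul_smul_comm, ← mul_assoc, pow_succ, mul_neg_one, neg_smul]

end Ring

section Matrix

variable {ι n R : Type*} [Fintype n] [DecidableEq n] [CommRing R]
  {γ : ι → Matrix n n R}

lemma kronecker_mul_self (hγ : IsCliffordFamily_s12 γ) (a : ι) :
    (γ a ⊗ₖ γ a) * (γ a ⊗ₖ γ a) = 1 := by
  rw [← Matrix.mul_kronecker_mul, hγ.mul_self, Matrix.one_kronecker_one]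

lemma kronecker_commute (hγ : IsCliffordFamily_s12 γ) (a b : ι) :
    Commute (γ a ⊗ₖ γ a) (γ b ⊗ₖ γ b) := by
  rcases eq_or_ne a b with rfl | hab
  · exact Commute.refl _
  · rw [Commute, SemiconjBy, ← Matrix.mul_kronecker_mul, ← Matrix.mul_kronecker_mul,
      hγ.anticomm hab]
    ext
    simp

lemma prod_kronecker_prod_reverse (hγ : IsCliffordFamily_s12 γ) {l : List ι} (hl : l.Nodup) :
    (l.map γ).prod ⊗ₖ (l.reverse.map γ).prod =
      (-1 : ℤ) ^ l.length.choose 2 • (l.map fun a => γ a ⊗ₖ γ a).prod := by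
  classical
  induction l with
  | nil => simp
  | cons a l ih =>
    obtain ⟨ha, hl⟩ := List.nodup_cons.mp hl
    have count : l.reverse.countP (· ≠ a) = l.length := by
      rw [List.countP_reverse, List.countP_eq_length]
      exact fun b hb => by simpa using ne_of_mem_of_not_mem hb ha
    have move : (l.reverse.map γ).prod * γ a =
        (-1 : ℤ) ^ l.length • (γ a * (l.reverse.map γ).prod) := by
      rw [hγ.mul_prod_map, count, smul_smul, ← mul_pow]
      simp
    simp only [List.map_cons, List.prod_cons, List.reverse_cons, List.map_append, List.prod_append,
      List.map_nil, List.prod_nil, mul_one, move, Matrix.kronecker_smul, Matrix.mul_kronecker_mul,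
      ih hl, List.length_cons, Nat.choose_succ_succ' _ 1, Nat.choose_one_right, pow_add,
      mul_smul_comm, smul_smul]

lemma trace_prod_map_eq_zero [DecidableEq ι] (hγ : IsCliffordFamily_s12 γ) (h2 : IsUnit (2 : R))
    {l : List ι} {c : ι} (hc : Odd (l.countP (· ≠ c))) : (l.map γ).prod.trace = 0 := by
  refine eq_zero_of_eq_neg_of_isUnit_two h2 ?_
  calc (l.map γ).prod.trace = (γ c * (l.map γ).prod * γ c).trace := by
        rw [Matrix.trace_mul_comm, ← mul_assoc, hγ.mul_self, one_mul]
    _ = -(l.map γ).prod.trace := by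
        rw [hγ.mul_prod_map, hc.neg_one_pow, smul_mul_assoc, mul_assoc, hγ.mul_self, mul_one,
          neg_one_smul, Matrix.trace_neg]

lemma trace_prod_toList_mul_prod_toList_reverse [Fintype ι] [DecidableEq ι]
    (hγ : IsCliffordFamily_s12 γ) (h2 : IsUnit (2 : R)) (hι : Even (Fintype.card ι)) (s t : Finset ι) :
    ((s.toList.map γ).prod * (t.toList.reverse.map γ).prod).trace =
      if s = t then (Fintype.card n : R) else 0 := by
  split_ifs with hst
  · rw [hst, hγ.prod_map_mul_prod_map_reverse, Matrix.trace_one]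
  · obtain ⟨c, hc⟩ := exists_odd_card_erase_add_card_erase hι hst
    have count (u : Finset ι) : u.toList.countP (· ≠ c) = #(u.erase c) := by
      rw [← filter_ne', card_def, filter_val, ← Multiset.countP_eq_card_filter, ← coe_toList,
        Multiset.coe_countP]
    rw [← List.prod_append, ← List.map_append]
    exact hγ.trace_prod_map_eq_zero h2 (c := c)
      (by rwa [List.countP_append, List.countP_reverse, count, count])

lemma smul_flipMatrix_eq_sum [Fintype ι] (hγ : IsCliffordFamily_s12 γ) (h2 : IsUnit (2 : R))
    (hι : Even (Fintype.card ι)) (hn : 2 ^ Fintype.card ι = Fintype.card n ^ 2) :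
    (Fintype.card n : R) • flipMatrix n R =
      ∑ s : Finset ι, (-1 : ℤ) ^ (#s).choose 2 • (s.toList.map fun a => γ a ⊗ₖ γ a).prod := by
  classical
  have isUnit_card : IsUnit (Fintype.card n : R) := by
    rw [← isUnit_pow_iff two_ne_zero, ← Nat.cast_pow, ← hn, Nat.cast_pow, Nat.cast_ofNat]
    exact h2.pow _
  rw [← sum_kronecker_eq_smul_flipMatrix (fun s : Finset ι => (s.toList.map γ).prod)
    (fun s => (s.toList.reverse.map γ).prod) isUnit_card (by rwa [Fintype.card_finset])
    (hγ.trace_prod_toList_mul_prod_toList_reverse h2 hι)]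
  exact sum_congr rfl fun s _ => by
    rw [hγ.prod_kronecker_prod_reverse s.nodup_toList, length_toList]

end Matrix

end IsCliffordFamily_s12

end Clifford

section Involutions

variable {σ B : Type*} [Fintype σ] [CommRing B] {x : σ → B}

lemma natCast_mul_aeval_esymm (k : ℕ) :
    (k : B) * aeval x (esymm σ ℤ k) = (-1) ^ (k + 1) *
      ∑ i ∈ range k, (-1) ^ i * aeval x (esymm σ ℤ i) * ∑ j, x j ^ (k - i) := by
  have newton := congrArg (aeval x) (mul_esymm_eq_sum σ ℤ k)
  rw [sum_filter, Nat.sum_antidiagonal_eq_sum_range_succ_mk, sum_range_succ, if_neg (lt_irrefl k),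
    add_zero, sum_congr rfl fun i hi => if_pos (mem_range.mp hi)] at newton
  simpa [psum] using newton

-- The power sums of involutions are `2`-periodic, so Newton's identities at `k + 2` and at `k`
-- share all but two terms.
lemma esymm_recurrence_of_sq_eq_one (hx : ∀ i, x i ^ 2 = 1) (k : ℕ) :
    ((k : B) + 2) * aeval x (esymm σ ℤ (k + 2)) =
      (∑ i, x i) * aeval x (esymm σ ℤ (k + 1)) -
        ((Fintype.card σ : B) - k) * aeval x (esymm σ ℤ k) := by
  have periodic : ∑ i ∈ range k, (-1) ^ i * aeval x (esymm σ ℤ i) * ∑ j, x j ^ (k + 2 - i) =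
      ∑ i ∈ range k, (-1) ^ i * aeval x (esymm σ ℤ i) * ∑ j, x j ^ (k - i) :=
    sum_congr rfl fun i hi => by
      simp only [Nat.sub_add_comm (mem_range.mp hi).le, pow_add, hx, mul_one]
  have newton := natCast_mul_aeval_esymm (x := x) k
  have newton_add_two := natCast_mul_aeval_esymm (x := x) (k + 2)
  rw [sum_range_succ, sum_range_succ, periodic] at newton_add_two
  have h2 : k + 2 - k = 2 := by omega
  have h1 : k + 2 - (k + 1) = 1 := by omega
  have sign : ((-1 : B) ^ k) * (-1) ^ k = 1 := by rw [← mul_pow]; simp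
  simp only [h2, h1, hx, pow_one, sum_const, card_univ, nsmul_eq_mul, mul_one] at newton_add_two
  push_cast at newton_add_two
  linear_combination newton_add_two - newton + ((∑ i, x i) *
    aeval x (esymm σ ℤ (k + 1)) - Fintype.card σ * aeval x (esymm σ ℤ k)) * sign

lemma sum_smul_prod_eq_sum_esymm (f : ℕ → ℤ) :
    ∑ s : Finset σ, f #s • ∏ i ∈ s, x i =
      ∑ k ∈ range (Fintype.card σ + 1), f k • aeval x (esymm σ ℤ k) := by
  rw [← powerset_univ, sum_powerset]
  refine sum_congr rfl fun k _ => ?_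
  rw [esymm, map_sum, smul_sum]
  refine sum_congr rfl fun s hs => ?_
  rw [(mem_powersetCard.mp hs).2, map_prod]
  simp only [aeval_X]

lemma sum_neg_one_pow_smul_prod_of_card_eq_four (hσ : Fintype.card σ = 4) (hx : ∀ i, x i ^ 2 = 1) :
    (24 : ℤ) • ∑ s : Finset σ, (-1 : ℤ) ^ (#s).choose 2 • ∏ i ∈ s, x i =
      (∑ i, x i) ^ 4 - (4 : ℤ) • (∑ i, x i) ^ 3 - (28 : ℤ) • (∑ i, x i) ^ 2 +
        (64 : ℤ) • ∑ i, x i + (96 : ℤ) • (1 : B) := by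
  set p := ∑ i, x i
  let e (k : ℕ) : B := aeval x (esymm σ ℤ k)
  have e₀ : e 0 = 1 := by simp only [e, esymm_zero, map_one]
  have e₁ : e 1 = p := by simp only [e, p, esymm_one, map_sum, aeval_X]
  have recurrence (k : ℕ) : ((k : B) + 2) * e (k + 2) = p * e (k + 1) - (4 - k) * e k := by
    simpa only [hσ, Nat.cast_ofNat] using esymm_recurrence_of_sq_eq_one hx k
  have e₂ : 2 * e 2 = p ^ 2 - 4 := by
    linear_combination (norm := (push_cast; ring)) recurrence 0 + p * e₁ - 4 * e₀
  have e₃ : 3 * e 3 = p * e 2 - 3 * p := by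
    linear_combination (norm := (push_cast; ring)) recurrence 1 - 3 * e₁
  have e₄ : 4 * e 4 = p * e 3 - 2 * e 2 := by
    linear_combination (norm := (push_cast; ring)) recurrence 2
  have expansion :
      ∑ s : Finset σ, (-1 : ℤ) ^ (#s).choose 2 • ∏ i ∈ s, x i = 1 + p - e 2 - e 3 + e 4 := by
    rw [sum_smul_prod_eq_sum_esymm fun k => (-1) ^ k.choose 2, hσ, ← e₀, ← e₁]
    norm_num [e, sum_range_succ, Nat.choose, sub_eq_add_neg]
  rw [expansion]
  simp only [zsmul_eq_mul, Int.cast_ofNat]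
  linear_combination 6 * e₄ + (2 * p - 8) * e₃ + (p ^ 2 - 4 * p - 18) * e₂

end Involutions

section CommutingInvolutions

variable {σ A : Type*} [Fintype σ] [Ring A] {g : σ → A}

open scoped IsMulCommutative in
lemma sum_neg_one_pow_smul_prod_toList_of_card_eq_four (hσ : Fintype.card σ = 4)
    (hcomm : ∀ i j, Commute (g i) (g j)) (hg : ∀ i, g i ^ 2 = 1) :
    (24 : ℤ) • ∑ s : Finset σ, (-1 : ℤ) ^ (#s).choose 2 • (s.toList.map g).prod =
      (∑ i, g i) ^ 4 - (4 : ℤ) • (∑ i, g i) ^ 3 - (28 : ℤ) • (∑ i, g i) ^ 2 +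
        (64 : ℤ) • ∑ i, g i + (96 : ℤ) • (1 : A) := by
  let B := Algebra.adjoin ℤ (Set.range g)
  have : IsMulCommutative B := Algebra.isMulCommutative_adjoin ℤ <| by
    rintro _ ⟨i, rfl⟩ _ ⟨j, rfl⟩
    exact hcomm i j
  let x (i : σ) : B := ⟨g i, Algebra.subset_adjoin ⟨i, rfl⟩⟩
  have hx (i : σ) : x i ^ 2 = 1 := Subtype.ext (hg i)
  have val_prod (s : Finset σ) : B.val (∏ i ∈ s, x i) = (s.toList.map g).prod := by
    rw [← prod_map_toList, map_list_prod, List.map_map]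
    rfl
  have val_sum : B.val (∑ i, x i) = ∑ i, g i := map_sum _ _ _
  have key := congrArg B.val (sum_neg_one_pow_smul_prod_of_card_eq_four hσ hx)
  simpa only [map_add, map_sub, map_zsmul, map_pow, map_one, val_prod, val_sum,
    map_sum B.val _ (univ : Finset (Finset σ))] using key

end CommutingInvolutions

theorem so4_flip_polynomial_in_z_general {ι n R : Type*} [Fintype ι] [DecidableEq ι]
    [Fintype n] [DecidableEq n] [CommRing R]
    (hι : Fintype.card ι = 4) (hn : Fintype.card n = 4) (h2 : IsUnit (2 : R))
    (γ : ι → Matrix n n R)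
    (hγ : ∀ a b, γ a * γ b + γ b * γ a = if a = b then (2 : R) • (1 : Matrix n n R) else 0)
    (z : Matrix (n × n) (n × n) R) (hz : (2 : R) • z = ∑ a, γ a ⊗ₖ γ a)
    (S : Matrix (n × n) (n × n) R)
    (hS : ∀ x y : n → R, S.mulVec (fun p => x p.1 * y p.2) = fun p => y p.1 * x p.2) :
    (6 : R) • S = z ^ 4 - (2 : R) • z ^ 3 - (7 : R) • z ^ 2 + (8 : R) • z +
      (6 : R) • (1 : Matrix (n × n) (n × n) R) := by
  have clifford := IsCliffordFamily_s12.of_anticommutator h2 hγ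
  have flip_sum := clifford.smul_flipMatrix_eq_sum h2 (by rw [hι]; decide) (by rw [hι, hn]; rfl)
  have sum_poly := sum_neg_one_pow_smul_prod_toList_of_card_eq_four hι clifford.kronecker_commute
    (fun a => by rw [sq, clifford.kronecker_mul_self])
  rw [← flip_sum, ← eq_flipMatrix_of_mulVec hS, ← hz, hn] at sum_poly
  simp only [smul_pow] at sum_poly
  refine (h2.pow 4).smul_left_cancel.mp ?_
  linear_combination (norm := module) sum_poly

/-- For a Clifford family `γ^1,…,γ^4` of `4×4` matrices and
`z = (1/2)·Σ_{a=1}^4 γ^a ⊗ γ^a`, the flip operator `S` on `ℂ⁴ ⊗ ℂ⁴` is the polynomial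
`S = (1/6)(z⁴ − 2z³ − 7z² + 8z + 6)` in `z`. -/
theorem so4_flip_polynomial_in_z
    (γ : Fin 4 → Matrix (Fin 4) (Fin 4) ℂ)
    (hγ : ∀ a b, γ a * γ b + γ b * γ a =
      if a = b then (2 : ℂ) • (1 : Matrix (Fin 4) (Fin 4) ℂ) else 0)
    (z : Matrix (Fin 4 × Fin 4) (Fin 4 × Fin 4) ℂ)
    (hz : z = (1/2 : ℂ) • ∑ a, γ a ⊗ₖ γ a)
    (S : Matrix (Fin 4 × Fin 4) (Fin 4 × Fin 4) ℂ)
    (hS : ∀ x y : Fin 4 → ℂ,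
      S.mulVec (fun p => x p.1 * y p.2) = fun p => y p.1 * x p.2) :
    S = (1/6 : ℂ) • (z ^ 4 - (2 : ℂ) • z ^ 3 - (7 : ℂ) • z ^ 2 + (8 : ℂ) • z +
          (6 : ℂ) • (1 : Matrix (Fin 4 × Fin 4) (Fin 4 × Fin 4) ℂ)) := by
  rw [← so4_flip_polynomial_in_z_general rfl rfl (IsUnit.mk0 2 two_ne_zero) γ hγ z
    (by rw [hz]; module) S hS]
  module
end
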